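/- Let I = [0,1] ⊂ ℝ be the closed unit interval. For every natural number n ≥ 2 there exists an identifying function f : Conf_n(I) → I, i.e. a continuous map with f(x) ≠ x(i) for every configuration x and every index i. -/

import Mathlib

/-- The ordered configuration space of `n` points in `X`, topologized as a
subspace of the product `X^n`. -/
abbrev Conf (n : ℕ) (X : Type*) [TopologicalSpace X] : Type _ :=
  {x : Fin n → X // Function.Injective x}

/-! Start at one point `x a` of the configuration and walk towards another point `x b`, over half
the distance from `x a` to the nearest other point. The point reached is not `x a`, and it is too
close to `x a` to be any other point of the configuration. Continuity only needs that the walk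
depends continuously on its endpoints, as it does along segments in a convex set or along the arcs
of a metric tree. -/

/-- An identifying function on the configurations of `n` points in `X`: a continuous choice of a
point of `X` outside each configuration. -/
structure IsIdentifying {n : ℕ} {X : Type*} [TopologicalSpace X] (f : Conf n X → X) : Prop where
  continuous : Continuous f
  ne (x : Conf n X) (i : Fin n) : f x ≠ x.1 i

section Gap

variable {ι : Type*} [Fintype ι] [DecidableEq ι] [Nontrivial ι]

/-- The distance from the point `x a` of a finite family to the nearest point with another index. -/
noncomputable def gap {X : Type*} [PseudoMetricSpace X] (x : ι → X) (a : ι) : ℝ :=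
  (Finset.univ.erase a).inf' Finset.univ_nontrivial.erase_nonempty fun j => dist (x a) (x j)

section PseudoMetricSpace

variable {X : Type*} [PseudoMetricSpace X]

theorem gap_le_dist (x : ι → X) {a j : ι} (hj : j ≠ a) : gap x a ≤ dist (x a) (x j) :=
  Finset.inf'_le _ (Finset.mem_erase.mpr ⟨hj, Finset.mem_univ j⟩)

theorem continuous_gap (a : ι) : Continuous fun x : ι → X => gap x a :=
  Continuous.finset_inf'_apply _ fun j _ => (continuous_apply a).dist (continuous_apply j)

theorem ne_of_dist_lt_gap {x : ι → X} {a : ι} {p : X} (hpos : 0 < dist (x a) p)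
    (hlt : dist (x a) p < gap x a) (i : ι) : p ≠ x i := by
  rintro rfl
  obtain rfl | hi := eq_or_ne i a
  · exact hpos.ne' (dist_self _)
  · exact hlt.not_ge (gap_le_dist x hi)

end PseudoMetricSpace

theorem gap_pos {X : Type*} [MetricSpace X] {x : ι → X} (hx : Function.Injective x) (a : ι) :
    0 < gap x a :=
  (Finset.lt_inf'_iff _).mpr fun _ hj => dist_pos.mpr (hx.ne (Finset.ne_of_mem_erase hj).symm)

end Gap

/-- A continuous choice, for every two points `x` and `y`, of a path along which the distance from
`x` grows linearly from `0` to `dist x y`. A continuous geodesic bicombing is an example, but the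
path from `x` chosen for `y` need not end at `y`. -/
structure RadialBicombing (X : Type*) [PseudoMetricSpace X] where
  path : X → X → unitInterval → X
  continuous_path : Continuous fun p : X × X × unitInterval => path p.1 p.2.1 p.2.2
  dist_path (x y : X) (t : unitInterval) : dist x (path x y t) = t * dist x y

namespace RadialBicombing

section PseudoMetricSpace

variable {X : Type*} [PseudoMetricSpace X] (σ : RadialBicombing X)

/-- The point at distance `r` from `x` on the path chosen for `x` and `y`. The parameter
`r / dist x y` is clamped to the unit interval, so the distance is right for
`0 ≤ r ≤ dist x y` only. -/
noncomputable def pointAt (x y : X) (r : ℝ) : X :=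
  σ.path x y (Set.projIcc 0 1 zero_le_one (r / dist x y))

theorem dist_pointAt {x y : X} {r : ℝ} (hr : 0 ≤ r) (hrd : r ≤ dist x y) :
    dist x (σ.pointAt x y r) = r := by
  have hmem : r / dist x y ∈ Set.Icc (0 : ℝ) 1 :=
    ⟨div_nonneg hr dist_nonneg, div_le_one_of_le₀ hrd dist_nonneg⟩
  rw [pointAt, dist_path, Set.projIcc_of_mem _ hmem]
  exact div_mul_cancel_of_imp fun h => le_antisymm (h ▸ hrd) hr

theorem continuous_pointAt {Y : Type*} [TopologicalSpace Y] {f g : Y → X} {r : Y → ℝ}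
    (hf : Continuous f) (hg : Continuous g) (hr : Continuous r) (hne : ∀ y, dist (f y) (g y) ≠ 0) :
    Continuous fun y => σ.pointAt (f y) (g y) (r y) := by
  have hparam : Continuous fun y =>
      Set.projIcc (0 : ℝ) 1 zero_le_one (r y / dist (f y) (g y)) :=
    continuous_projIcc.comp (hr.div (hf.dist hg) hne)
  exact σ.continuous_path.comp (hf.prodMk (hg.prodMk hparam))

end PseudoMetricSpace

/-- The bicombing of a convex set by its segments, parametrized proportionally to arc length. -/
noncomputable def ofConvex {E : Type*} [SeminormedAddCommGroup E] [NormedSpace ℝ E] {S : Set E}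
    (hS : Convex ℝ S) : RadialBicombing S where
  path x y t := ⟨AffineMap.lineMap (x : E) y (t : ℝ), hS.lineMap_mem x.2 y.2 t.2⟩
  continuous_path := by
    refine Continuous.subtype_mk ?_ _
    simp only [AffineMap.lineMap_apply_module]
    fun_prop
  dist_path x y t := by
    rw [Subtype.dist_eq, dist_left_lineMap, Real.norm_of_nonneg t.2.1, Subtype.dist_eq]

theorem isIdentifying_pointAt_gap_div_two {X : Type*} [MetricSpace X]
    (σ : RadialBicombing X) {n : ℕ} [Nontrivial (Fin n)] {a b : Fin n} (hab : a ≠ b) :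
    IsIdentifying fun x : Conf n X => σ.pointAt (x.1 a) (x.1 b) (gap x.1 a / 2) where
  continuous := by
    have hpoint (i : Fin n) : Continuous fun x : Conf n X => x.1 i :=
      (continuous_apply i).comp continuous_subtype_val
    have hgap : Continuous fun x : Conf n X => gap x.1 a :=
      (continuous_gap a).comp continuous_subtype_val
    exact σ.continuous_pointAt (hpoint a) (hpoint b) (hgap.div_const 2)
      fun x => dist_ne_zero.mpr (x.2.ne hab)
  ne x i := by
    have hpos : 0 < gap x.1 a := gap_pos x.2 a
    have hle : gap x.1 a ≤ dist (x.1 a) (x.1 b) := gap_le_dist x.1 hab.symm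
    have hdist : dist (x.1 a) (σ.pointAt (x.1 a) (x.1 b) (gap x.1 a / 2)) = gap x.1 a / 2 :=
      σ.dist_pointAt (half_pos hpos).le ((half_le_self hpos.le).trans hle)
    exact ne_of_dist_lt_gap (hdist.symm ▸ half_pos hpos) (hdist.trans_lt (half_lt_self hpos)) i

end RadialBicombing

theorem interval_identifying_function_general {X : Type*} [MetricSpace X] (σ : RadialBicombing X)
    {n : ℕ} (hn : 2 ≤ n) : ∃ f : Conf n X → X, IsIdentifying f := by
  have : Nontrivial (Fin n) := Fin.nontrivial_iff_two_le.mpr hn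
  obtain ⟨a, b, hab⟩ := exists_pair_ne (Fin n)
  exact ⟨_, σ.isIdentifying_pointAt_gap_div_two hab⟩

/-- For every `n ≥ 2` the closed unit interval `I = [0,1]` admits an identifying
function `f : Conf_n(I) → I`. -/
theorem interval_identifying_function (n : ℕ) (hn : 2 ≤ n) :
    ∃ f : Conf n (Set.Icc (0 : ℝ) 1) → Set.Icc (0 : ℝ) 1, Continuous f ∧
      ∀ (x : Conf n (Set.Icc (0 : ℝ) 1)) (i : Fin n), f x ≠ x.1 i := by
  obtain ⟨f, hf⟩ := interval_identifying_function_general (.ofConvex (convex_Icc (0 : ℝ) 1)) hn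
  exact ⟨f, hf.continuous, hf.ne⟩
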